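/- The partition function satisfies the Hardy–Ramanujan asymptotic: lim_{n→∞} p(n)/L(n) = 1, where L(n) = (1/(4n√3))·exp(π√(2n/3)). -/

import Mathlib

open scoped Real

noncomputable section

/-- `p n` is the number of partitions of `n`. -/
def partitionCount (n : ℕ) : ℕ := Fintype.card (Nat.Partition n)

/-- `L(n) = (1/(4n√3)) exp(π√(2n/3))`. -/
def hardyRamanujanL (n : ℕ) : ℝ :=
  1 / (4 * n * Real.sqrt 3) * Real.exp (Real.pi * Real.sqrt (2 * n / 3))

/-!
Write `P(q) = ∑ p(n) qⁿ = ∏ (1 - qᵏ)⁻¹`. Cauchy's formula on the circle `q = exp (-w)`, `Re w = t`,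
expresses `p(n)` as the mean of `P(exp (-w)) exp (nw)`. The transformation law of the Dedekind eta
function gives `P(exp (-w)) = √(w / 2π) exp (π² / 6w - w / 24) P(exp (-4π² / w))`, where the last
factor tends to `1` as `w → 0` inside a sector around the positive axis. The exponent
`π² / 6w + nw` has its saddle point at `w = t = π / √(6n)`, and after rescaling the angle by the
width of the saddle the integrand converges to the Gaussian `exp (-v²)`.

The convergence is dominated. For `|Im w| ≤ 2πt` this is read off from the transformation law. For
`2πt ≤ |Im w| ≤ π`, comparing the Euler products factor by factor gives
`|P(q)| ≤ P(|q|) exp (Re (q / (1 - q)) - |q| / (1 - |q|))`; here `|1 - q| ≥ 2t`, whereas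
`1 - |q| ≤ t`, so that `P(q)` is smaller than `P(|q|)` by a factor `exp (-1 / 8t)`, which beats
every power of `t`.
-/

open Complex Filter Topology MeasureTheory

section AbsoluteSum
open PowerSeries Finset

variable {R : Type*} [NormedCommRing R]

/-- The power series `f` converges absolutely at `x`, with sum `a`. -/
structure HasAbsSumAt (f : R⟦X⟧) (x a : R) : Prop where
  summable_norm : Summable fun n ↦ ‖coeff n f * x ^ n‖
  hasSum : HasSum (fun n ↦ coeff n f * x ^ n) a

namespace HasAbsSumAt

theorem one (x : R) : HasAbsSumAt 1 x 1 where
  summable_norm := (summable_of_ne_finset_zero (s := {0}) fun n hn ↦ by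
    simp [coeff_one, notMem_singleton.1 hn])
  hasSum := by
    simpa using hasSum_single (f := fun n ↦ coeff n (1 : R⟦X⟧) * x ^ n) 0 fun n hn ↦ by
      simp [coeff_one, hn]

variable [CompleteSpace R] {f g : R⟦X⟧} {x a b : R}

theorem mul (hf : HasAbsSumAt f x a) (hg : HasAbsSumAt g x b) :
    HasAbsSumAt (f * g) x (a * b) := by
  have coeff_mul_pow (n : ℕ) : coeff n (f * g) * x ^ n = ∑ kl ∈ antidiagonal n,
      (coeff kl.1 f * x ^ kl.1) * (coeff kl.2 g * x ^ kl.2) := by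
    rw [coeff_mul, sum_mul]
    refine sum_congr rfl fun kl hkl ↦ ?_
    rw [← mem_antidiagonal.1 hkl]
    ring
  have summable_norm :=
    summable_norm_sum_mul_antidiagonal_of_summable_norm hf.summable_norm hg.summable_norm
  simp_rw [← coeff_mul_pow] at summable_norm
  refine ⟨summable_norm, ?_⟩
  rw [← hf.hasSum.tsum_eq, ← hg.hasSum.tsum_eq,
    tsum_mul_tsum_eq_tsum_sum_antidiagonal_of_summable_norm hf.summable_norm hg.summable_norm]
  simp_rw [← coeff_mul_pow]
  exact summable_norm.of_norm.hasSum

theorem prod {ι : Type*} {f : ι → R⟦X⟧} {a : ι → R} (s : Finset ι)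
    (h : ∀ i ∈ s, HasAbsSumAt (f i) x (a i)) : HasAbsSumAt (∏ i ∈ s, f i) x (∏ i ∈ s, a i) := by
  classical
  induction s using Finset.induction_on with
  | empty => simpa using one x
  | insert i s hi ih =>
    rw [prod_insert hi, prod_insert hi]
    exact (h i (mem_insert_self i s)).mul (ih fun j hj ↦ h j (mem_insert_of_mem hj))

end HasAbsSumAt

open PowerSeries.WithPiTopology in
theorem coeff_tsum_X_pow_mul (R : Type*) [Semiring R] [TopologicalSpace R] [T2Space R]
    {d : ℕ} (hd : d ≠ 0) (n : ℕ) :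
    coeff n (∑' j : ℕ, (X : R⟦X⟧) ^ (d * j)) = if d ∣ n then 1 else 0 := by
  have hsum : HasSum (fun j : ℕ ↦ (X : R⟦X⟧) ^ (d * j)) (mk fun n ↦ if d ∣ n then 1 else 0) := by
    refine (hasSum_iff_hasSum_coeff R).2 fun n ↦ ?_
    simp only [coeff_X_pow, coeff_mk]
    split_ifs with hn
    · obtain ⟨k, rfl⟩ := hn
      simpa [hd, eq_comm] using hasSum_ite_eq k (1 : R)
    · have hne (j : ℕ) : n ≠ d * j := fun h ↦ hn ⟨j, h⟩
      simp [hne, hasSum_zero]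
  rw [hsum.tsum_eq, coeff_mk]

open PowerSeries.WithPiTopology in
theorem hasAbsSumAt_tsum_X_pow_mul {𝕜 : Type*} [NormedField 𝕜] {d : ℕ} (hd : d ≠ 0)
    {x : 𝕜} (hx : ‖x‖ < 1) : HasAbsSumAt (∑' j : ℕ, (X : 𝕜⟦X⟧) ^ (d * j)) x (1 - x ^ d)⁻¹ where
  summable_norm := by
    refine (summable_geometric_of_lt_one (norm_nonneg x) hx).of_nonneg_of_le
      (fun _ ↦ norm_nonneg _) fun n ↦ ?_
    rw [coeff_tsum_X_pow_mul 𝕜 hd]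
    split_ifs <;> simp
  hasSum := by
    have hinj : Function.Injective fun j : ℕ ↦ d * j := mul_right_injective₀ hd
    have hxd : ‖x ^ d‖ < 1 := by simpa using pow_lt_one₀ (norm_nonneg x) hx hd
    simp_rw [coeff_tsum_X_pow_mul 𝕜 hd]
    rw [← hinj.hasSum_iff]
    · simpa [Function.comp_def, pow_mul] using hasSum_geometric_of_norm_lt_one hxd
    · rintro n hn
      rw [if_neg fun h : d ∣ n ↦ hn (h.imp fun _ ↦ Eq.symm), zero_mul]

end AbsoluteSum

section EulerProduct
open PowerSeries Finset

/-- The number of partitions of `n` all of whose parts are at most `m`. -/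
def boundedPartitionCount (m n : ℕ) : ℕ := #(Nat.Partition.restricted n (· ≤ m))

theorem boundedPartitionCount_le (m n : ℕ) : boundedPartitionCount m n ≤ partitionCount n :=
  card_le_univ _

theorem boundedPartitionCount_of_le {m n : ℕ} (h : n ≤ m) :
    boundedPartitionCount m n = partitionCount n := by
  have : Nat.Partition.restricted n (· ≤ m) = univ :=
    filter_true_of_mem fun _ _ _ hi ↦ (Nat.Partition.le_of_mem_parts hi).trans h
  rw [boundedPartitionCount, this, card_univ, partitionCount]

open PowerSeries.WithPiTopology in
theorem mk_boundedPartitionCount (R : Type*) [CommSemiring R] [TopologicalSpace R]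
    [IsTopologicalSemiring R] [T2Space R] (m : ℕ) :
    (mk fun n ↦ (boundedPartitionCount m n : R)) =
      ∏ i ∈ range m, ∑' j : ℕ, (X : R⟦X⟧) ^ ((i + 1) * j) := by
  refine (Nat.Partition.hasProd_powerSeriesMk_card_restricted R (· ≤ m)).unique ?_
  rw [← prod_congr rfl fun i hi ↦ if_pos (Nat.succ_le_of_lt (mem_range.1 hi))]
  exact hasProd_prod_of_ne_finset_one fun i hi ↦ if_neg (by simpa [Nat.succ_le_iff] using hi)

variable {𝕜 : Type*} [NormedField 𝕜] {q : 𝕜}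

theorem summable_norm_neg_pow_succ (hq : ‖q‖ < 1) : Summable fun k : ℕ ↦ ‖-q ^ (k + 1)‖ := by
  simpa using (summable_nat_add_iff 1).2 (summable_geometric_of_lt_one (norm_nonneg q) hq)

variable [CompleteSpace 𝕜]

theorem hasAbsSumAt_boundedPartitionCount (m : ℕ) (hq : ‖q‖ < 1) :
    HasAbsSumAt (mk fun n ↦ (boundedPartitionCount m n : 𝕜)) q
      (∏ i ∈ range m, (1 - q ^ (i + 1))⁻¹) := by
  rw [mk_boundedPartitionCount]
  exact .prod _ fun i _ ↦ hasAbsSumAt_tsum_X_pow_mul i.succ_ne_zero hq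

theorem tprod_one_sub_pow_ne_zero (hq : ‖q‖ < 1) : ∏' k : ℕ, (1 - q ^ (k + 1)) ≠ 0 := by
  simp_rw [sub_eq_add_neg]
  refine tprod_one_add_ne_zero_of_summable (fun k h ↦ ?_) (summable_norm_neg_pow_succ hq)
  have hlt : ‖q ^ (k + 1)‖ < 1 := by simpa using pow_lt_one₀ (norm_nonneg q) hq k.succ_ne_zero
  simp [show q ^ (k + 1) = 1 by linear_combination -h] at hlt

theorem tendsto_prod_inv_one_sub_pow (hq : ‖q‖ < 1) :
    Tendsto (fun m ↦ ∏ i ∈ range m, (1 - q ^ (i + 1))⁻¹) atTop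
      (𝓝 (∏' k : ℕ, (1 - q ^ (k + 1)))⁻¹) := by
  have hprod : Multipliable fun k : ℕ ↦ 1 - q ^ (k + 1) := by
    simp_rw [sub_eq_add_neg]
    exact multipliable_one_add_of_summable (summable_norm_neg_pow_succ hq)
  simp_rw [prod_inv_distrib]
  exact hprod.hasProd.tendsto_prod_nat.inv₀ (tprod_one_sub_pow_ne_zero hq)

theorem summable_partitionCount_mul_pow {r : ℝ} (hr0 : 0 ≤ r) (hr1 : r < 1) :
    Summable fun n ↦ (partitionCount n : ℝ) * r ^ n := by
  have hr : ‖r‖ < 1 := by rwa [Real.norm_of_nonneg hr0]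
  refine summable_of_sum_range_le (fun n ↦ by positivity) fun M ↦
    ge_of_tendsto (tendsto_prod_inv_one_sub_pow hr) ?_
  filter_upwards [eventually_ge_atTop M] with m hm
  have hsum := (hasAbsSumAt_boundedPartitionCount m hr).hasSum
  simp only [coeff_mk] at hsum
  calc ∑ n ∈ range M, (partitionCount n : ℝ) * r ^ n
      = ∑ n ∈ range M, (boundedPartitionCount m n : ℝ) * r ^ n :=
        sum_congr rfl fun n hn ↦ by
          rw [boundedPartitionCount_of_le ((mem_range.1 hn).le.trans hm)]
    _ ≤ _ := sum_le_hasSum _ (fun n _ ↦ by positivity) hsum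

/-- The generating function `∑ p(n) qⁿ` of the partition numbers, encoded as Euler's product; it is
meaningful for `‖q‖ < 1`. -/
def partitionGenFun (q : ℂ) : ℂ := (∏' k : ℕ, (1 - q ^ (k + 1)))⁻¹

theorem hasSum_partitionGenFun {q : ℂ} (hq : ‖q‖ < 1) :
    HasSum (fun n ↦ (partitionCount n : ℂ) * q ^ n) (partitionGenFun q) := by
  have hdom := summable_partitionCount_mul_pow (norm_nonneg q) hq
  have hsummable : Summable fun n ↦ (partitionCount n : ℂ) * q ^ n :=
    .of_norm (by simpa using hdom)
  have hlim : Tendsto (fun m ↦ ∑' n, (boundedPartitionCount m n : ℂ) * q ^ n) atTop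
      (𝓝 (∑' n, (partitionCount n : ℂ) * q ^ n)) := by
    refine tendsto_tsum_of_dominated_convergence hdom (fun n ↦ ?_) (.of_forall fun m n ↦ ?_)
    · refine tendsto_const_nhds.congr' ?_
      filter_upwards [eventually_ge_atTop n] with m hm
      rw [boundedPartitionCount_of_le hm]
    · simp only [norm_mul, norm_natCast, norm_pow]
      gcongr
      exact boundedPartitionCount_le m n
  have hprod (m : ℕ) : ∑' n, (boundedPartitionCount m n : ℂ) * q ^ n =
      ∏ i ∈ range m, (1 - q ^ (i + 1))⁻¹ := by
    simpa using (hasAbsSumAt_boundedPartitionCount m hq).hasSum.tsum_eq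
  simp_rw [hprod] at hlim
  rw [partitionGenFun, tendsto_nhds_unique (tendsto_prod_inv_one_sub_pow hq) hlim]
  exact hsummable.hasSum

end EulerProduct

section CauchyFormula

theorem integral_exp_int_mul_I (k : ℤ) :
    ∫ θ in (-π)..π, cexp (k * θ * I) = if k = 0 then 2 * π else 0 := by
  split_ifs with hk
  · simp [hk, two_mul]
  · have hperiod : cexp (k * I * π) = cexp (k * I * ↑(-π)) :=
      exp_eq_exp_iff_exists_int.2 ⟨k, by push_cast; ring⟩
    simp_rw [mul_right_comm _ _ I]
    rw [integral_exp_mul_complex (by simp [hk]), hperiod, sub_self, zero_div, ofReal_zero]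

theorem integral_circleMap_pow_div_pow {r : ℝ} (hr : r ≠ 0) (m n : ℕ) :
    ∫ θ in (-π)..π, circleMap 0 r θ ^ m / circleMap 0 r θ ^ n = if m = n then 2 * π else 0 := by
  have integrand_eq (θ : ℝ) : circleMap 0 r θ ^ m / circleMap 0 r θ ^ n =
      r ^ m / r ^ n * cexp (((m - n : ℤ) : ℂ) * θ * I) := by
    have : cexp (((m - n : ℤ) : ℂ) * θ * I) = cexp (θ * I) ^ m / cexp (θ * I) ^ n := by
      rw [← Complex.exp_nat_mul, ← Complex.exp_nat_mul, ← Complex.exp_sub]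
      push_cast
      ring_nf
    rw [this, circleMap_zero]
    ring
  simp_rw [integrand_eq, intervalIntegral.integral_const_mul, integral_exp_int_mul_I, sub_eq_zero,
    Nat.cast_inj]
  split_ifs with h
  · simp [h, hr]
  · simp

theorem coeff_eq_integral_circleMap {a : ℕ → ℂ} {f : ℂ → ℂ} {r : ℝ} (hr : 0 < r)
    (ha : Summable fun m ↦ ‖a m‖ * r ^ m)
    (hf : ∀ q, ‖q‖ = r → HasSum (fun m ↦ a m * q ^ m) (f q)) (n : ℕ) :
    a n = (2 * π : ℂ)⁻¹ * ∫ θ in (-π)..π, f (circleMap 0 r θ) / circleMap 0 r θ ^ n := by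
  have norm_circleMap (θ : ℝ) : ‖circleMap 0 r θ‖ = r := by simp [abs_of_pos hr]
  have hsum : HasSum (fun m ↦ ∫ θ in (-π)..π, a m * circleMap 0 r θ ^ m / circleMap 0 r θ ^ n)
      (∫ θ in (-π)..π, f (circleMap 0 r θ) / circleMap 0 r θ ^ n) := by
    refine intervalIntegral.hasSum_integral_of_dominated_convergence
      (fun m _ ↦ ‖a m‖ * r ^ m / r ^ n) (fun m ↦ ?_) (fun m ↦ .of_forall fun θ _ ↦ ?_)
      (.of_forall fun _ _ ↦ ha.div_const _) intervalIntegrable_const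
      (.of_forall fun θ _ ↦ (hf _ (norm_circleMap θ)).div_const _)
    · refine Continuous.aestronglyMeasurable (.div (by fun_prop) (by fun_prop) fun θ ↦ ?_)
      exact pow_ne_zero n (circleMap_ne_center hr.ne')
    · rw [norm_div, norm_mul, norm_pow, norm_pow, norm_circleMap]
  have integral_term (m : ℕ) :
      ∫ θ in (-π)..π, a m * circleMap 0 r θ ^ m / circleMap 0 r θ ^ n =
        if m = n then 2 * π * a n else 0 := by
    simp_rw [mul_div_assoc, intervalIntegral.integral_const_mul,
      integral_circleMap_pow_div_pow hr.ne']
    split_ifs with h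
    · simp [h, mul_comm]
    · simp
  simp_rw [integral_term] at hsum
  rw [hsum.unique (hasSum_ite_eq n _), inv_mul_cancel_left₀ (by simp [Real.pi_ne_zero])]

end CauchyFormula

section PartitionGenFun

theorem norm_exp_neg_lt_one {w : ℂ} (hw : 0 < w.re) : ‖cexp (-w)‖ < 1 := by
  simpa [norm_exp] using hw

theorem partitionGenFun_zero : partitionGenFun 0 = 1 := by simp [partitionGenFun]

theorem partitionGenFun_ne_zero {q : ℂ} (hq : ‖q‖ < 1) : partitionGenFun q ≠ 0 :=
  inv_ne_zero (tprod_one_sub_pow_ne_zero hq)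

theorem differentiableOn_partitionGenFun : DifferentiableOn ℂ partitionGenFun (Metric.ball 0 1) :=
  ModularForm.differentiableOn_tprod_one_sub_pow.inv fun _ hq ↦
    tprod_one_sub_pow_ne_zero (mem_ball_zero_iff.1 hq)

theorem continuousAt_partitionGenFun {q : ℂ} (hq : ‖q‖ < 1) : ContinuousAt partitionGenFun q :=
  (differentiableOn_partitionGenFun.differentiableAt
    (Metric.isOpen_ball.mem_nhds (mem_ball_zero_iff.2 hq))).continuousAt

theorem tendsto_partitionGenFun_zero : Tendsto partitionGenFun (𝓝 0) (𝓝 1) := by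
  simpa [ContinuousAt, partitionGenFun_zero] using continuousAt_partitionGenFun (q := 0) (by simp)

theorem continuous_partitionGenFun_exp_neg {X : Type*} [TopologicalSpace X] {f : X → ℂ}
    (hf : Continuous f) (hre : ∀ x, 0 < (f x).re) :
    Continuous fun x ↦ partitionGenFun (cexp (-f x)) :=
  continuous_iff_continuousAt.2 fun x ↦
    ContinuousAt.comp (g := partitionGenFun)
      (continuousAt_partitionGenFun (norm_exp_neg_lt_one (hre x))) (by fun_prop)

theorem partitionCount_eq_integral (n : ℕ) {t : ℝ} (ht : 0 < t) :
    (partitionCount n : ℂ) = (2 * π : ℂ)⁻¹ *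
      ∫ θ in (-π)..π, partitionGenFun (cexp (-(t - θ * I))) * cexp (n * (t - θ * I)) := by
  have hlt : Real.exp (-t) < 1 := by simpa using ht
  have hcircle (θ : ℝ) : circleMap 0 (Real.exp (-t)) θ = cexp (-(t - θ * I)) := by
    rw [circleMap_zero, ofReal_exp, ← Complex.exp_add]
    push_cast
    ring_nf
  rw [coeff_eq_integral_circleMap (a := fun m ↦ (partitionCount m : ℂ)) (f := partitionGenFun)
    (Real.exp_pos (-t)) (by simpa using summable_partitionCount_mul_pow (Real.exp_pos _).le hlt)
    (fun q hq ↦ hasSum_partitionGenFun (hq.trans_lt hlt)) n]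
  simp_rw [hcircle, div_eq_mul_inv, ← Complex.exp_nat_mul, ← Complex.exp_neg, mul_neg, neg_neg]

end PartitionGenFun

section EtaTransformation

theorem eta_I_mul_div_two_pi (w : ℂ) :
    ModularForm.eta (I * w / (2 * π)) = cexp (-w / 24) * (partitionGenFun (cexp (-w)))⁻¹ := by
  have hπ : (π : ℂ) ≠ 0 := ofReal_ne_zero.2 Real.pi_ne_zero
  have I_mul_I_mul_div : 2 * π * I * (I * w / (2 * π)) = -w := by
    field_simp
    rw [I_sq, neg_one_mul]
  rw [ModularForm.eta, partitionGenFun, inv_inv, Function.Periodic.qParam, ofReal_ofNat,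
    I_mul_I_mul_div]
  congr 1
  refine tprod_congr fun n ↦ ?_
  rw [ModularForm.eta_q_eq_pow, I_mul_I_mul_div]

theorem sqrt_I_mul {w : ℂ} (hw : 0 < w.re) :
    Complex.sqrt (I * w) = Complex.sqrt I * Complex.sqrt w := by
  have hw0 : w ≠ 0 := ne_zero_of_re_pos hw
  have harg := abs_lt.1 (abs_arg_lt_pi_div_two_iff.2 (.inl hw))
  have hlog : log (I * w) = log I + log w :=
    log_mul I_ne_zero hw0 (by rw [arg_I]; constructor <;> linarith [Real.pi_pos])
  rw [sqrt_eq_exp (mul_ne_zero I_ne_zero hw0), sqrt_eq_exp I_ne_zero, sqrt_eq_exp hw0, hlog,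
    add_div, Complex.exp_add]

theorem eta_I_div {w : ℂ} (hw : 0 < w.re) :
    ModularForm.eta (I / w) = Complex.sqrt w * ModularForm.eta (I * w) := by
  have hw0 : w ≠ 0 := ne_zero_of_re_pos hw
  have heta := ModularForm.eta_comp_eq_csqrt_I_inv (x := I * w)
    (show 0 < (I * w).im by simpa using hw)
  have hS : -1 / (I * w) = I / w := by
    field_simp
    rw [I_sq]
  simp only [Function.comp, Pi.smul_apply, Pi.mul_apply, smul_eq_mul] at heta
  rwa [hS, sqrt_I_mul hw, mul_assoc, inv_mul_cancel_left₀ (by simp [sqrt_eq_exp I_ne_zero])]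
    at heta

theorem partitionGenFun_exp_neg {w : ℂ} (hw : 0 < w.re) :
    partitionGenFun (cexp (-w)) = Complex.sqrt (w / (2 * π)) * cexp (π ^ 2 / (6 * w) - w / 24) *
      partitionGenFun (cexp (-(4 * π ^ 2 / w))) := by
  have hπ : (π : ℂ) ≠ 0 := ofReal_ne_zero.2 Real.pi_ne_zero
  have hw0 : w ≠ 0 := ne_zero_of_re_pos hw
  have hw_div : 0 < (w / (2 * π)).re := by
    rw [← ofReal_ofNat, ← ofReal_mul, div_ofReal_re]
    positivity
  have hw_inv : 0 < (4 * π ^ 2 / w).re := by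
    have : (4 * π ^ 2 / w : ℂ) = (4 * π ^ 2 : ℝ) * w⁻¹ := by
      push_cast
      rfl
    rw [this, re_ofReal_mul, inv_re]
    have := normSq_pos.2 hw0
    positivity
  have heta := eta_I_div hw_div
  have hI_div : I / (w / (2 * π)) = I * (4 * π ^ 2 / w) / (2 * π) := by
    field_simp
    ring
  rw [hI_div, ← mul_div_assoc I w, eta_I_mul_div_two_pi, eta_I_mul_div_two_pi] at heta
  have hexp : cexp (π ^ 2 / (6 * w) - w / 24) = cexp (-w / 24) / cexp (-(4 * π ^ 2 / w) / 24) := by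
    rw [← Complex.exp_sub]
    congr 1
    field_simp
    ring
  have hq := partitionGenFun_ne_zero (norm_exp_neg_lt_one hw)
  have hq_inv := partitionGenFun_ne_zero (norm_exp_neg_lt_one hw_inv)
  rw [hexp]
  field_simp [Complex.exp_ne_zero] at heta ⊢
  linear_combination heta

end EtaTransformation

section ArcBounds

theorem sqrt_pow_two (z : ℂ) : Complex.sqrt z ^ 2 = z := by
  simp [Complex.sqrt]

theorem norm_complex_sqrt (z : ℂ) : ‖Complex.sqrt z‖ = √‖z‖ := by
  rw [eq_comm, Real.sqrt_eq_iff_eq_sq (norm_nonneg z) (norm_nonneg _), ← norm_pow, sqrt_pow_two]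

-- Compare `-log (1 - z) = ∑ zʲ / j` with the one at `‖z‖`, keeping only the term `j = 1`.
theorem norm_inv_one_sub_le {z : ℂ} (hz : ‖z‖ < 1) :
    ‖(1 - z)⁻¹‖ ≤ (1 - ‖z‖)⁻¹ * Real.exp (z.re - ‖z‖) := by
  have hnorm : ‖((‖z‖ : ℝ) : ℂ)‖ < 1 := by simpa using hz
  have hterm (j : ℕ) : (z ^ j / j).re ≤ ((‖z‖ : ℂ) ^ j / j).re := by
    refine (re_le_norm _).trans_eq ?_
    rw [norm_div, norm_pow, norm_natCast, ← ofReal_pow, ← ofReal_natCast, ← ofReal_div, ofReal_re]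
  have hlog := le_hasSum ((hasSum_re (hasSum_taylorSeries_neg_log hnorm)).sub
    (hasSum_re (hasSum_taylorSeries_neg_log hz))) 1 fun j _ ↦ sub_nonneg.2 (hterm j)
  simp only [pow_one, Nat.cast_one, div_one, neg_re, log_re, ofReal_re] at hlog
  have hpos : 0 < ‖1 - z‖ := norm_pos_iff.2 (sub_ne_zero.2 fun h ↦ by simp [← h] at hz)
  have hone_sub : ‖1 - (‖z‖ : ℂ)‖ = 1 - ‖z‖ := by
    rw [← ofReal_one, ← ofReal_sub, norm_real, Real.norm_of_nonneg (sub_nonneg.2 hz.le)]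
  rw [hone_sub] at hlog
  rw [norm_inv, ← Real.exp_log hpos, ← Real.exp_log (sub_pos.2 hz), ← Real.exp_neg, ← Real.exp_neg,
    ← Real.exp_add, Real.exp_le_exp]
  linarith

theorem norm_partitionGenFun_le {q : ℂ} (hq : ‖q‖ < 1) :
    ‖partitionGenFun q‖ ≤
      ‖partitionGenFun ‖q‖‖ * Real.exp ((q / (1 - q)).re - ‖q‖ / (1 - ‖q‖)) := by
  have hnorm : ‖((‖q‖ : ℝ) : ℂ)‖ < 1 := by simpa using hq
  have hsum : Tendsto (fun m ↦ ∑ i ∈ Finset.range m, ((q ^ (i + 1)).re - ‖q‖ ^ (i + 1))) atTop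
      (𝓝 ((q / (1 - q)).re - ‖q‖ / (1 - ‖q‖))) := by
    have hre := hasSum_re ((hasSum_geometric_of_norm_lt_one hq).mul_left q)
    have hnorm := (hasSum_geometric_of_lt_one (norm_nonneg q) hq).mul_left ‖q‖
    simpa only [← pow_succ', ← div_eq_mul_inv] using (hre.sub hnorm).tendsto_sum_nat
  refine le_of_tendsto_of_tendsto' (tendsto_prod_inv_one_sub_pow hq).norm
    ((tendsto_prod_inv_one_sub_pow hnorm).norm.mul (hsum.rexp)) fun m ↦ ?_
  rw [Real.exp_sum, norm_prod, norm_prod, ← Finset.prod_mul_distrib]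
  refine Finset.prod_le_prod (fun _ _ ↦ norm_nonneg _) fun i _ ↦ ?_
  have hpow : ‖q‖ ^ (i + 1) < 1 := pow_lt_one₀ (norm_nonneg q) hq i.succ_ne_zero
  have hfactor : ‖(1 - (‖q‖ : ℂ) ^ (i + 1))⁻¹‖ = (1 - ‖q ^ (i + 1)‖)⁻¹ := by
    rw [norm_pow, norm_inv, ← ofReal_one, ← ofReal_pow, ← ofReal_sub, norm_real,
      Real.norm_of_nonneg (sub_nonneg.2 hpow.le)]
  rw [hfactor, ← norm_pow]
  exact norm_inv_one_sub_le (by rwa [norm_pow])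

theorem norm_one_sub_exp_neg_sq (w : ℂ) : ‖1 - cexp (-w)‖ ^ 2 =
    (1 - Real.exp (-w.re)) ^ 2 + 4 * Real.exp (-w.re) * Real.sin (w.im / 2) ^ 2 := by
  have hcos : Real.cos w.im = 1 - 2 * Real.sin (w.im / 2) ^ 2 := by
    have := Real.cos_two_mul (w.im / 2)
    rw [mul_div_cancel₀ w.im two_ne_zero] at this
    linarith [Real.sin_sq_add_cos_sq (w.im / 2)]
  rw [← normSq_eq_norm_sq, normSq_apply]
  simp only [sub_re, sub_im, one_re, one_im, exp_re, exp_im, neg_re, neg_im, Real.cos_neg,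
    Real.sin_neg]
  linear_combination Real.exp (-w.re) ^ 2 * Real.sin_sq_add_cos_sq w.im -
    2 * Real.exp (-w.re) * hcos

theorem one_fourth_le_exp_neg {t : ℝ} (ht : t ≤ 1) : 1 / 4 ≤ Real.exp (-t) :=
  calc (1 / 4 : ℝ) ≤ Real.exp (-1) := by linarith [Real.exp_neg_one_gt_d9]
    _ ≤ Real.exp (-t) := Real.exp_le_exp.2 (neg_le_neg ht)

theorem two_mul_re_le_norm_one_sub_exp_neg {w : ℂ} (h0 : 0 ≤ w.re) (h1 : w.re ≤ 1)
    (hlow : 2 * π * w.re ≤ |w.im|) (hup : |w.im| ≤ π) : 2 * w.re ≤ ‖1 - cexp (-w)‖ := by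
  have hsin : 2 * w.re ≤ Real.sin (|w.im| / 2) :=
    calc 2 * w.re ≤ 2 / π * (|w.im| / 2) := by
          rw [div_mul_div_comm, mul_comm π, mul_div_mul_left _ _ two_ne_zero,
            le_div_iff₀ Real.pi_pos]
          linarith
      _ ≤ Real.sin (|w.im| / 2) := Real.mul_le_sin (by positivity) (by linarith)
  have hsin_sq : (2 * w.re) ^ 2 ≤ Real.sin (w.im / 2) ^ 2 := by
    have habs : Real.sin (|w.im| / 2) ^ 2 = Real.sin (w.im / 2) ^ 2 := by
      rcases abs_cases w.im with ⟨h, -⟩ | ⟨h, -⟩ <;> simp [h, neg_div]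
    rw [← habs]
    gcongr
  refine le_of_sq_le_sq ?_ (norm_nonneg _)
  rw [norm_one_sub_exp_neg_sq]
  nlinarith [one_fourth_le_exp_neg h1, sq_nonneg (1 - Real.exp (-w.re)), sq_nonneg (2 * w.re)]

theorem eventually_norm_partitionGenFun_exp_neg_le : ∀ᶠ t : ℝ in 𝓝[>] 0,
    ‖partitionGenFun (Real.exp (-t))‖ ≤ 2 * Real.exp (π ^ 2 / (6 * t)) := by
  have hdual : Tendsto (fun t : ℝ ↦ partitionGenFun (cexp (-(4 * π ^ 2 / t)))) (𝓝[>] 0) (𝓝 1) := by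
    refine tendsto_partitionGenFun_zero.comp (tendsto_zero_iff_norm_tendsto_zero.2 ?_)
    have : Tendsto (fun t : ℝ ↦ 4 * π ^ 2 / t) (𝓝[>] 0) atTop :=
      tendsto_inv_nhdsGT_zero.const_mul_atTop (by positivity)
    refine (Real.tendsto_exp_neg_atTop_nhds_zero.comp this).congr fun t ↦ ?_
    rw [Function.comp_apply, norm_exp]
    norm_cast
  filter_upwards [hdual.norm.eventually_le_const (by simp : ‖(1 : ℂ)‖ < 2),
    Ioo_mem_nhdsGT Real.two_pi_pos] with t hdual ⟨ht0, ht⟩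
  have hsqrt : ‖Complex.sqrt (t / (2 * π))‖ ≤ 1 := by
    rw [norm_complex_sqrt, Real.sqrt_le_one, ← ofReal_ofNat, ← ofReal_mul, ← ofReal_div,
      norm_real, Real.norm_of_nonneg (by positivity), div_le_one Real.two_pi_pos]
    exact ht.le
  have hexp : ‖cexp (π ^ 2 / (6 * t) - t / 24)‖ ≤ Real.exp (π ^ 2 / (6 * t)) := by
    rw [norm_exp, Real.exp_le_exp]
    norm_cast
    linarith
  rw [ofReal_exp, ofReal_neg, partitionGenFun_exp_neg (by simpa using ht0), norm_mul, norm_mul]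
  calc _ ≤ 1 * Real.exp (π ^ 2 / (6 * t)) * 2 := by gcongr
    _ = 2 * Real.exp (π ^ 2 / (6 * t)) := by ring

theorem re_div_one_sub_sub_le_of_two_mul_le {q : ℂ} {t : ℝ} (ht0 : 0 < t) (ht1 : t ≤ 1)
    (hq : ‖q‖ = Real.exp (-t)) (hone_sub : 2 * t ≤ ‖1 - q‖) :
    (q / (1 - q)).re - ‖q‖ / (1 - ‖q‖) ≤ -(1 / (8 * t)) := by
  have hre : (q / (1 - q)).re ≤ ‖q‖ / (2 * t) := by
    refine (re_le_norm _).trans ?_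
    rw [norm_div]
    gcongr
  have hreal : ‖q‖ / t ≤ ‖q‖ / (1 - ‖q‖) := by
    have : 0 < 1 - ‖q‖ := by rw [hq, sub_pos, Real.exp_lt_one_iff]; linarith
    gcongr
    rw [hq]
    linarith [Real.add_one_le_exp (-t)]
  have hquarter : 1 / (8 * t) ≤ ‖q‖ / (2 * t) := by
    rw [div_le_div_iff₀ (by positivity) (by positivity), hq]
    nlinarith [one_fourth_le_exp_neg ht1]
  have hhalf : ‖q‖ / t - ‖q‖ / (2 * t) = ‖q‖ / (2 * t) := by
    field_simp
    ring
  linarith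

theorem eventually_norm_partitionGenFun_minorArc_le : ∀ᶠ t : ℝ in 𝓝[>] 0, ∀ w : ℂ, w.re = t →
    2 * π * t ≤ |w.im| → |w.im| ≤ π →
      ‖partitionGenFun (cexp (-w))‖ ≤ 2 * Real.exp (π ^ 2 / (6 * t) - 1 / (8 * t)) := by
  filter_upwards [eventually_norm_partitionGenFun_exp_neg_le, Ioo_mem_nhdsGT one_pos]
    with t hreal ⟨ht0, ht1⟩ w rfl hlow hup
  have hnorm : ‖cexp (-w)‖ = Real.exp (-w.re) := norm_exp _
  have hsub := re_div_one_sub_sub_le_of_two_mul_le ht0 ht1.le hnorm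
    (two_mul_re_le_norm_one_sub_exp_neg ht0.le ht1.le hlow hup)
  calc ‖partitionGenFun (cexp (-w))‖
    _ ≤ _ := norm_partitionGenFun_le (norm_exp_neg_lt_one ht0)
    _ ≤ 2 * Real.exp (π ^ 2 / (6 * w.re)) * Real.exp (-(1 / (8 * w.re))) := by
      rw [hnorm] at hsub ⊢
      gcongr
    _ = _ := by rw [mul_assoc, ← Real.exp_add, ← sub_eq_add_neg]

end ArcBounds

section SaddlePoint

/-- The saddle point `w = π² ε² / 6` of the exponent `π² / (6w) + nw`, where `n = 6 / (π² ε⁴)`. In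
terms of this parameter, `nw = 1 / ε²`. -/
def saddlePoint (ε : ℝ) : ℝ := π ^ 2 * ε ^ 2 / 6

/-- The vertical line through the saddle point, normalised so that the saddle point is `1`; the
coordinate `v` is measured in units of the width `ε` of the saddle. -/
def saddleLine (ε v : ℝ) : ℂ := 1 - ε * v * I

/-- The integrand of Cauchy's formula for the partition numbers along `saddleLine ε`, divided by its
order of magnitude at the saddle point. -/
def saddleIntegrand (ε v : ℝ) : ℂ :=
  partitionGenFun (cexp (-(saddlePoint ε * saddleLine ε v))) * cexp (saddleLine ε v / ε ^ 2) /
    (ε * √(π / 12) * Real.exp (2 / ε ^ 2) : ℝ)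

/-- The value of the coordinate `v` at which the angle on the circle of integration, which is the
product of `saddlePoint ε` and `ε * v`, equals `π`. -/
def saddleRadius (ε : ℝ) : ℝ := 6 / (π * ε ^ 3)

/-- The normalised integral of Cauchy's formula over the whole circle. -/
def saddleIntegral (ε : ℝ) : ℂ := ∫ v in -saddleRadius ε..saddleRadius ε, saddleIntegrand ε v

theorem saddlePoint_pos {ε : ℝ} (hε : 0 < ε) : 0 < saddlePoint ε := by
  rw [saddlePoint]
  positivity

theorem saddleRadius_pos {ε : ℝ} (hε : 0 < ε) : 0 < saddleRadius ε := by
  rw [saddleRadius]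
  positivity

theorem saddlePoint_mul_saddleRadius {ε : ℝ} (hε : ε ≠ 0) :
    saddlePoint ε * ε * saddleRadius ε = π := by
  rw [saddlePoint, saddleRadius]
  field_simp

theorem saddleLine_re (ε v : ℝ) : (saddleLine ε v).re = 1 := by simp [saddleLine]

theorem saddleLine_im (ε v : ℝ) : (saddleLine ε v).im = -(ε * v) := by simp [saddleLine]

theorem saddleLine_ne_zero (ε v : ℝ) : saddleLine ε v ≠ 0 :=
  ne_zero_of_re_pos (by simp [saddleLine_re])

theorem inv_saddleLine_re (ε v : ℝ) : (saddleLine ε v)⁻¹.re = 1 / (1 + (ε * v) ^ 2) := by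
  rw [inv_re, normSq_apply, saddleLine_re, saddleLine_im]
  ring

theorem re_saddlePoint_mul_saddleLine (ε v : ℝ) :
    (saddlePoint ε * saddleLine ε v).re = saddlePoint ε := by
  rw [re_ofReal_mul, saddleLine_re, mul_one]

theorem continuous_saddleIntegrand {ε : ℝ} (hε : 0 < ε) : Continuous (saddleIntegrand ε) := by
  have hline : Continuous (saddleLine ε) := by
    unfold saddleLine
    fun_prop
  have hgenFun := continuous_partitionGenFun_exp_neg (hline.const_mul (saddlePoint ε : ℂ))
    fun v ↦ by rw [re_saddlePoint_mul_saddleLine]; exact saddlePoint_pos hε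
  exact (hgenFun.mul (by fun_prop)).div_const _

theorem sqrt_ofReal_mul {c : ℝ} (hc : 0 ≤ c) (z : ℂ) :
    Complex.sqrt (c * z) = √c * Complex.sqrt z := by
  rcases hc.eq_or_lt with rfl | hc
  · simp
  rcases eq_or_ne z 0 with rfl | hz
  · simp
  rw [sqrt_eq_exp (mul_ne_zero (ofReal_ne_zero.2 hc.ne') hz), sqrt_eq_exp hz,
    log_ofReal_mul hc hz, add_div, Complex.exp_add, Real.sqrt_eq_rpow, Real.rpow_def_of_pos hc,
    ofReal_exp]
  push_cast
  ring_nf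

theorem saddleLine_div_sq_add {ε : ℝ} (hε : ε ≠ 0) (v : ℝ) :
    saddleLine ε v / ε ^ 2 + (saddleLine ε v)⁻¹ / ε ^ 2 =
      2 / ε ^ 2 - v ^ 2 * (saddleLine ε v)⁻¹ := by
  have hε' : (ε : ℂ) ≠ 0 := ofReal_ne_zero.2 hε
  have hline := saddleLine_ne_zero ε v
  have hquad : (saddleLine ε v - 1) ^ 2 = -(ε * v) ^ 2 := by
    rw [saddleLine]
    linear_combination (ε * v : ℂ) ^ 2 * I_sq
  field_simp
  linear_combination hquad

theorem sqrt_saddlePoint_mul_saddleLine {ε : ℝ} (hε : 0 ≤ ε) (v : ℝ) :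
    Complex.sqrt (saddlePoint ε * saddleLine ε v / (2 * π)) =
      (ε * √(π / 12) : ℝ) * Complex.sqrt (saddleLine ε v) := by
  have : saddlePoint ε * saddleLine ε v / (2 * π) = (ε ^ 2 * (π / 12) : ℝ) * saddleLine ε v := by
    have hπ : (π : ℂ) ≠ 0 := ofReal_ne_zero.2 Real.pi_ne_zero
    rw [saddlePoint]
    push_cast
    field_simp
    ring
  rw [this, sqrt_ofReal_mul (by positivity), Real.sqrt_mul (by positivity), Real.sqrt_sq hε]

theorem exp_saddlePoint_mul_saddleLine {ε : ℝ} (hε : ε ≠ 0) (v : ℝ) :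
    cexp (π ^ 2 / (6 * (saddlePoint ε * saddleLine ε v)) - saddlePoint ε * saddleLine ε v / 24) *
        cexp (saddleLine ε v / ε ^ 2) =
      cexp (-(v ^ 2 * (saddleLine ε v)⁻¹)) * cexp (-((saddlePoint ε / 24 : ℝ) * saddleLine ε v)) *
        Real.exp (2 / ε ^ 2) := by
  have hinv : (π ^ 2 / (6 * (saddlePoint ε * saddleLine ε v)) : ℂ) =
      (saddleLine ε v)⁻¹ / ε ^ 2 := by
    have hπ : (π : ℂ) ≠ 0 := ofReal_ne_zero.2 Real.pi_ne_zero
    rw [saddlePoint]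
    push_cast
    field_simp
  rw [hinv, ofReal_exp, ← Complex.exp_add, ← Complex.exp_add, ← Complex.exp_add]
  congr 1
  push_cast
  linear_combination saddleLine_div_sq_add hε v

theorem saddleIntegrand_eq {ε : ℝ} (hε : 0 < ε) (v : ℝ) : saddleIntegrand ε v =
    Complex.sqrt (saddleLine ε v) * cexp (-(v ^ 2 * (saddleLine ε v)⁻¹)) *
      cexp (-((saddlePoint ε / 24 : ℝ) * saddleLine ε v)) *
      partitionGenFun (cexp (-((24 / ε ^ 2 : ℝ) * (saddleLine ε v)⁻¹))) := by
  have hdual : (4 * π ^ 2 / (saddlePoint ε * saddleLine ε v) : ℂ) =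
      (24 / ε ^ 2 : ℝ) * (saddleLine ε v)⁻¹ := by
    have hπ : (π : ℂ) ≠ 0 := ofReal_ne_zero.2 Real.pi_ne_zero
    rw [saddlePoint]
    push_cast
    field_simp
    ring
  have hscale : ((ε * √(π / 12) * Real.exp (2 / ε ^ 2) : ℝ) : ℂ) ≠ 0 :=
    ofReal_ne_zero.2 (by positivity)
  rw [saddleIntegrand, div_eq_iff hscale, ofReal_mul (ε * √(π / 12)), partitionGenFun_exp_neg
    (by rw [re_saddlePoint_mul_saddleLine]; exact saddlePoint_pos hε),
    sqrt_saddlePoint_mul_saddleLine hε.le, hdual]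
  linear_combination (ε * √(π / 12) : ℝ) * Complex.sqrt (saddleLine ε v) *
    partitionGenFun (cexp (-((24 / ε ^ 2 : ℝ) * (saddleLine ε v)⁻¹))) *
    exp_saddlePoint_mul_saddleLine hε.ne' v

theorem tendsto_div_pow_nhdsGT_zero {c : ℝ} (hc : 0 < c) {k : ℕ} (hk : k ≠ 0) :
    Tendsto (fun ε : ℝ ↦ c / ε ^ k) (𝓝[>] 0) atTop := by
  simpa [Function.comp_def, div_eq_mul_inv] using
    ((tendsto_pow_atTop hk).comp tendsto_inv_nhdsGT_zero).const_mul_atTop hc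

theorem tendsto_saddleLine (v : ℝ) : Tendsto (saddleLine · v) (𝓝[>] 0) (𝓝 1) := by
  have : Continuous (saddleLine · v) := by
    unfold saddleLine
    fun_prop
  simpa [saddleLine] using (this.tendsto 0).mono_left nhdsWithin_le_nhds

theorem tendsto_saddlePoint : Tendsto saddlePoint (𝓝[>] 0) (𝓝[>] 0) := by
  have : Continuous saddlePoint := by
    unfold saddlePoint
    fun_prop
  refine tendsto_nhdsWithin_iff.2
    ⟨by simpa [saddlePoint] using (this.tendsto 0).mono_left nhdsWithin_le_nhds, ?_⟩
  filter_upwards [self_mem_nhdsWithin] with ε hε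
  exact saddlePoint_pos hε

theorem norm_exp_neg_mul_inv_saddleLine (c ε v : ℝ) :
    ‖cexp (-(c * (saddleLine ε v)⁻¹))‖ = Real.exp (-(c * (1 / (1 + (ε * v) ^ 2)))) := by
  rw [norm_exp, neg_re, re_ofReal_mul, inv_saddleLine_re]

theorem tendsto_partitionGenFun_dual_saddleLine (v : ℝ) :
    Tendsto (fun ε : ℝ ↦ partitionGenFun (cexp (-((24 / ε ^ 2 : ℝ) * (saddleLine ε v)⁻¹))))
      (𝓝[>] 0) (𝓝 1) := by
  refine tendsto_partitionGenFun_zero.comp (tendsto_zero_iff_norm_tendsto_zero.2 ?_)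
  simp_rw [norm_exp_neg_mul_inv_saddleLine]
  refine Real.tendsto_exp_neg_atTop_nhds_zero.comp
    ((tendsto_div_pow_nhdsGT_zero (by norm_num) two_ne_zero).atTop_mul_pos one_pos ?_)
  have : Continuous fun ε : ℝ ↦ 1 / (1 + (ε * v) ^ 2) :=
    continuous_const.div (by fun_prop) fun ε ↦ by positivity
  simpa using (this.tendsto 0).mono_left (nhdsWithin_le_nhds (s := Set.Ioi 0))

theorem tendsto_saddleIntegrand (v : ℝ) :
    Tendsto (saddleIntegrand · v) (𝓝[>] 0) (𝓝 (Real.exp (-v ^ 2) : ℝ)) := by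
  have hline := tendsto_saddleLine v
  have hsqrt : Tendsto (fun ε ↦ Complex.sqrt (saddleLine ε v)) (𝓝[>] 0) (𝓝 1) := by
    simpa [Function.comp_def] using
      (differentiableAt_sqrt (by simp : (1 : ℂ) ∈ slitPlane)).continuousAt.tendsto.comp hline
  have hgauss : Tendsto (fun ε ↦ cexp (-(v ^ 2 * (saddleLine ε v)⁻¹))) (𝓝[>] 0)
      (𝓝 (Real.exp (-v ^ 2) : ℝ)) := by
    simpa using ((hline.inv₀ one_ne_zero).const_mul ((v : ℂ) ^ 2)).neg.cexp
  have hsmall : Tendsto (fun ε ↦ cexp (-((saddlePoint ε / 24 : ℝ) * saddleLine ε v))) (𝓝[>] 0)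
      (𝓝 1) := by
    have := (tendsto_nhds_of_tendsto_nhdsWithin tendsto_saddlePoint).div_const 24
    simpa using ((tendsto_ofReal_iff.2 this).mul hline).neg.cexp
  have hprod := ((hsqrt.mul hgauss).mul hsmall).mul (tendsto_partitionGenFun_dual_saddleLine v)
  rw [one_mul, mul_one, mul_one] at hprod
  refine hprod.congr' ?_
  filter_upwards [self_mem_nhdsWithin] with ε hε
  rw [saddleIntegrand_eq hε]

theorem norm_sqrt_saddleLine_le {ε v : ℝ} (hv : |ε * v| ≤ 2 * π) :
    ‖Complex.sqrt (saddleLine ε v)‖ ≤ √(1 + 2 * π) := by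
  rw [norm_complex_sqrt]
  gcongr
  have := norm_le_abs_re_add_abs_im (saddleLine ε v)
  rw [saddleLine_re, saddleLine_im, abs_neg, abs_one] at this
  linarith

theorem eventually_norm_saddleIntegrand_majorArc_le : ∀ᶠ ε in 𝓝[>] 0, ∀ v : ℝ, |ε * v| ≤ 2 * π →
    ‖saddleIntegrand ε v‖ ≤
      2 * √(1 + 2 * π) * Real.exp (-(1 / (1 + (2 * π) ^ 2)) * v ^ 2) := by
  obtain ⟨δ, hδ, hgenFun⟩ := Metric.eventually_nhds_iff.1
    (tendsto_partitionGenFun_zero.norm.eventually_le_const (by simp : ‖(1 : ℂ)‖ < 2))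
  have hsmall : ∀ᶠ ε : ℝ in 𝓝[>] 0, Real.exp (-(24 / (1 + (2 * π) ^ 2) / ε ^ 2)) < δ :=
    (Real.tendsto_exp_neg_atTop_nhds_zero.comp (tendsto_div_pow_nhdsGT_zero
      (by positivity : 0 < 24 / (1 + (2 * π) ^ 2)) two_ne_zero)).eventually_lt_const hδ
  filter_upwards [hsmall, self_mem_nhdsWithin] with ε hsmall (hε : 0 < ε) v hv
  have hinv : 1 / (1 + (2 * π) ^ 2) ≤ 1 / (1 + (ε * v) ^ 2) := by
    have : (ε * v) ^ 2 ≤ (2 * π) ^ 2 := sq_le_sq.2 (hv.trans (le_abs_self _))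
    gcongr
  have hgauss : ‖cexp (-(v ^ 2 * (saddleLine ε v)⁻¹))‖ ≤
      Real.exp (-(1 / (1 + (2 * π) ^ 2)) * v ^ 2) := by
    rw [← ofReal_pow, norm_exp_neg_mul_inv_saddleLine, neg_mul, mul_comm (v ^ 2)]
    gcongr
  have hdecay : ‖cexp (-((saddlePoint ε / 24 : ℝ) * saddleLine ε v))‖ ≤ 1 := by
    rw [norm_exp, Real.exp_le_one_iff, neg_re, re_ofReal_mul, saddleLine_re]
    linarith [saddlePoint_pos hε]
  have hdual : ‖partitionGenFun (cexp (-((24 / ε ^ 2 : ℝ) * (saddleLine ε v)⁻¹)))‖ ≤ 2 := by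
    refine hgenFun (lt_of_le_of_lt ?_ hsmall)
    rw [dist_zero_right, norm_exp_neg_mul_inv_saddleLine, div_right_comm,
      ← mul_one_div (24 / ε ^ 2)]
    gcongr
  rw [saddleIntegrand_eq hε, norm_mul, norm_mul, norm_mul]
  calc _ ≤ √(1 + 2 * π) * Real.exp (-(1 / (1 + (2 * π) ^ 2)) * v ^ 2) * 1 * 2 := by
        gcongr
        exact norm_sqrt_saddleLine_le hv
    _ = _ := by ring

theorem tendsto_inv_pow_mul_exp_neg_div_sq {c : ℝ} (hc : 0 < c) (k : ℕ) :
    Tendsto (fun ε : ℝ ↦ ε⁻¹ ^ k * Real.exp (-(c / ε ^ 2))) (𝓝[>] 0) (𝓝 0) := by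
  have hcocompact : Tendsto (fun ε : ℝ ↦ ε⁻¹) (𝓝[>] 0) (cocompact ℝ) :=
    tendsto_inv_nhdsGT_zero.mono_right atTop_le_cocompact
  refine ((tendsto_rpow_abs_mul_exp_neg_mul_sq_cocompact hc k).comp hcocompact).congr' ?_
  filter_upwards [self_mem_nhdsWithin] with ε hε
  rw [Function.comp_apply, Real.rpow_natCast, abs_of_pos (inv_pos.2 hε), neg_mul, inv_pow ε 2,
    div_eq_mul_inv]

-- The decay rate is that of `exp (-1 / (8t))` at `t = saddlePoint ε`.
theorem tendsto_minorArc_error : Tendsto (fun ε : ℝ ↦ 2 / (ε * √(π / 12)) *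
    Real.exp (-(3 / (4 * π ^ 2) / ε ^ 2)) * (1 + saddleRadius ε ^ 2)) (𝓝[>] 0) (𝓝 0) := by
  have htendsto := tendsto_inv_pow_mul_exp_neg_div_sq (by positivity : 0 < 3 / (4 * π ^ 2))
  have hsum := ((htendsto 1).const_mul (2 / √(π / 12))).add
    ((htendsto 7).const_mul (2 / √(π / 12) * (6 / π) ^ 2))
  rw [mul_zero, mul_zero, add_zero] at hsum
  refine hsum.congr' ?_
  filter_upwards [self_mem_nhdsWithin] with ε (hε : 0 < ε)
  have : 0 < √(π / 12) := by positivity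
  rw [saddleRadius]
  field_simp

theorem norm_saddleIntegrand_le_of_minorArc {ε v : ℝ} (hε : 0 < ε)
    (hgenFun : ‖partitionGenFun (cexp (-(saddlePoint ε * saddleLine ε v)))‖ ≤
      2 * Real.exp (π ^ 2 / (6 * saddlePoint ε) - 1 / (8 * saddlePoint ε))) :
    ‖saddleIntegrand ε v‖ ≤ 2 / (ε * √(π / 12)) * Real.exp (-(3 / (4 * π ^ 2) / ε ^ 2)) := by
  have hexp : ‖cexp (saddleLine ε v / ε ^ 2)‖ = Real.exp (1 / ε ^ 2) := by
    rw [norm_exp, ← ofReal_pow, div_ofReal_re, saddleLine_re]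
  have hexponent : π ^ 2 / (6 * saddlePoint ε) - 1 / (8 * saddlePoint ε) =
      -(3 / (4 * π ^ 2) / ε ^ 2) + 2 / ε ^ 2 - 1 / ε ^ 2 := by
    rw [saddlePoint]
    field_simp
    ring
  rw [hexponent, Real.exp_sub, Real.exp_add] at hgenFun
  rw [saddleIntegrand, norm_div, norm_mul, hexp, norm_real, Real.norm_of_nonneg (by positivity),
    div_le_iff₀ (by positivity)]
  calc _ ≤ _ := mul_le_mul_of_nonneg_right hgenFun (Real.exp_nonneg _)
    _ = _ := by field_simp

theorem eventually_norm_saddleIntegrand_minorArc_le : ∀ᶠ ε in 𝓝[>] 0, ∀ v : ℝ,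
    2 * π ≤ |ε * v| → |v| ≤ saddleRadius ε → ‖saddleIntegrand ε v‖ ≤ (1 + v ^ 2)⁻¹ := by
  filter_upwards [tendsto_saddlePoint.eventually eventually_norm_partitionGenFun_minorArc_le,
    tendsto_minorArc_error.eventually_le_const one_pos, self_mem_nhdsWithin]
    with ε hgenFun herror (hε : 0 < ε) v hlow hup
  have hpos := saddlePoint_pos hε
  have him : |(saddlePoint ε * saddleLine ε v).im| = saddlePoint ε * |ε * v| := by
    rw [im_ofReal_mul, saddleLine_im, abs_mul, abs_neg, abs_of_pos hpos]
  have hangle : saddlePoint ε * |ε * v| ≤ π := by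
    rw [abs_mul, abs_of_pos hε, ← mul_assoc, ← saddlePoint_mul_saddleRadius hε.ne']
    gcongr
  have hbound := norm_saddleIntegrand_le_of_minorArc hε <|
    hgenFun _ (re_saddlePoint_mul_saddleLine ε v) (by rw [him]; nlinarith) (by rwa [him])
  rw [← one_div, le_div_iff₀ (by positivity)]
  refine le_trans ?_ herror
  have : v ^ 2 ≤ saddleRadius ε ^ 2 := sq_le_sq.2 (hup.trans (le_abs_self _))
  gcongr

theorem eventually_norm_indicator_saddleIntegrand_le : ∀ᶠ ε in 𝓝[>] 0, ∀ v : ℝ,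
    ‖(Set.Ioc (-saddleRadius ε) (saddleRadius ε)).indicator (saddleIntegrand ε) v‖ ≤
      2 * √(1 + 2 * π) * Real.exp (-(1 / (1 + (2 * π) ^ 2)) * v ^ 2) + (1 + v ^ 2)⁻¹ := by
  filter_upwards [eventually_norm_saddleIntegrand_majorArc_le,
    eventually_norm_saddleIntegrand_minorArc_le] with ε hmajor hminor v
  by_cases hv : v ∈ Set.Ioc (-saddleRadius ε) (saddleRadius ε)
  · rw [Set.indicator_of_mem hv]
    rcases le_total |ε * v| (2 * π) with hle | hge
    · exact (hmajor v hle).trans (le_add_of_nonneg_right (by positivity))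
    · exact (hminor v hge (abs_le.2 ⟨hv.1.le, hv.2⟩)).trans
        (le_add_of_nonneg_left (by positivity))
  · rw [Set.indicator_of_notMem hv, norm_zero]
    positivity

theorem tendsto_saddleIntegral : Tendsto saddleIntegral (𝓝[>] 0) (𝓝 √π) := by
  have hgauss : ∫ v : ℝ, ((Real.exp (-v ^ 2) : ℝ) : ℂ) = √π := by
    rw [integral_complex_ofReal]
    simpa using integral_gaussian 1
  have hradius : Tendsto saddleRadius (𝓝[>] 0) atTop :=
    (tendsto_div_pow_nhdsGT_zero (by positivity : 0 < 6 / π) three_ne_zero).congr fun ε ↦ by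
      rw [saddleRadius, div_div]
  have hindicator : Tendsto (fun ε ↦ ∫ v, (Set.Ioc (-saddleRadius ε) (saddleRadius ε)).indicator
      (saddleIntegrand ε) v) (𝓝[>] 0) (𝓝 (∫ v : ℝ, ((Real.exp (-v ^ 2) : ℝ) : ℂ))) := by
    refine tendsto_integral_filter_of_dominated_convergence (fun v ↦ 2 * √(1 + 2 * π) *
      Real.exp (-(1 / (1 + (2 * π) ^ 2)) * v ^ 2) + (1 + v ^ 2)⁻¹) ?_ ?_ ?_ ?_
    · filter_upwards [self_mem_nhdsWithin] with ε hε
      exact (continuous_saddleIntegrand hε).aestronglyMeasurable.indicator measurableSet_Ioc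
    · filter_upwards [eventually_norm_indicator_saddleIntegrand_le] with ε hε
      exact .of_forall hε
    · exact ((integrable_exp_neg_mul_sq (by positivity)).const_mul _).add integrable_inv_one_add_sq
    · refine .of_forall fun v ↦ (tendsto_saddleIntegrand v).congr' ?_
      filter_upwards [hradius.eventually_gt_atTop |v|] with ε hv
      have hmem : v ∈ Set.Ioc (-saddleRadius ε) (saddleRadius ε) :=
        ⟨(abs_lt.1 hv).1, (abs_lt.1 hv).2.le⟩
      rw [Set.indicator_of_mem hmem]
  rw [← hgauss]
  refine hindicator.congr' ?_
  filter_upwards [self_mem_nhdsWithin] with ε hε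
  have := saddleRadius_pos hε
  rw [saddleIntegral, integral_indicator measurableSet_Ioc,
    intervalIntegral.integral_of_le (by linarith)]

end SaddlePoint

section MainTerm

theorem partitionCount_eq_saddleIntegral {n : ℕ} {ε : ℝ} (hε : 0 < ε)
    (hn : (n : ℝ) = 6 / (π ^ 2 * ε ^ 4)) : (partitionCount n : ℂ) =
      (saddlePoint ε * ε / (2 * π) * (ε * √(π / 12) * Real.exp (2 / ε ^ 2)) : ℝ) *
        saddleIntegral ε := by
  have hscale : ((ε * √(π / 12) * Real.exp (2 / ε ^ 2) : ℝ) : ℂ) ≠ 0 :=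
    ofReal_ne_zero.2 (by positivity)
  have hn_mul : (n * saddlePoint ε : ℂ) = 1 / ε ^ 2 := by
    have : n * saddlePoint ε = 1 / ε ^ 2 := by
      rw [hn, saddlePoint]
      field_simp
    exact_mod_cast congrArg ofReal this
  have hintegrand (v : ℝ) :
      partitionGenFun (cexp (-(saddlePoint ε - (saddlePoint ε * ε * v : ℝ) * I))) *
          cexp (n * (saddlePoint ε - (saddlePoint ε * ε * v : ℝ) * I)) =
        (ε * √(π / 12) * Real.exp (2 / ε ^ 2) : ℝ) * saddleIntegrand ε v := by
    have hline : saddlePoint ε - (saddlePoint ε * ε * v : ℝ) * I =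
        saddlePoint ε * saddleLine ε v := by
      rw [saddleLine]
      push_cast
      ring
    rw [hline, ← mul_assoc, hn_mul, one_div_mul_eq_div, saddleIntegrand, mul_div_cancel₀ _ hscale]
  have hchange := intervalIntegral.smul_integral_comp_mul_left
    (a := -saddleRadius ε) (b := saddleRadius ε)
    (fun θ : ℝ ↦ partitionGenFun (cexp (-(saddlePoint ε - θ * I))) *
      cexp (n * (saddlePoint ε - θ * I))) (saddlePoint ε * ε)
  simp only [hintegrand, intervalIntegral.integral_const_mul, mul_neg,
    saddlePoint_mul_saddleRadius hε.ne', real_smul] at hchange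
  rw [partitionCount_eq_integral n (saddlePoint_pos hε), ← hchange, saddleIntegral]
  push_cast
  ring

theorem hardyRamanujanL_eq {n : ℕ} {ε : ℝ} (hε : ε ≠ 0) (hn : (n : ℝ) = 6 / (π ^ 2 * ε ^ 4)) :
    hardyRamanujanL n = π ^ 2 * ε ^ 4 / (24 * √3) * Real.exp (2 / ε ^ 2) := by
  have hsqrt : √(2 * n / 3) = 2 / (π * ε ^ 2) := by
    rw [Real.sqrt_eq_iff_mul_self_eq_of_pos (by positivity), hn]
    field_simp
    norm_num
  rw [hardyRamanujanL, hsqrt, hn]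
  congr 1
  · field_simp
    norm_num
  · congr 1
    field_simp

theorem partitionCount_div_hardyRamanujanL {n : ℕ} {ε : ℝ} (hε : 0 < ε)
    (hn : (n : ℝ) = 6 / (π ^ 2 * ε ^ 4)) :
    ((partitionCount n / hardyRamanujanL n : ℝ) : ℂ) = (√π : ℂ)⁻¹ * saddleIntegral ε := by
  have hL := hardyRamanujanL_eq hε.ne' hn
  have hsqrt : √(π / 12) = √π / (2 * √3) := by
    rw [Real.sqrt_div Real.pi_pos.le, (by norm_num : (12 : ℝ) = 2 ^ 2 * 3),
      Real.sqrt_mul (by positivity), Real.sqrt_sq zero_le_two]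
  have hconst : saddlePoint ε * ε / (2 * π) * (ε * √(π / 12) * Real.exp (2 / ε ^ 2)) =
      (√π)⁻¹ * hardyRamanujanL n := by
    rw [hL, hsqrt, saddlePoint]
    field_simp
    rw [Real.sq_sqrt Real.pi_pos.le]
    ring
  have hL0 : (hardyRamanujanL n : ℂ) ≠ 0 := by
    rw [hL]
    exact ofReal_ne_zero.2 (by positivity)
  rw [ofReal_div, ofReal_natCast, div_eq_iff hL0, partitionCount_eq_saddleIntegral hε hn, hconst]
  push_cast
  ring

/-- The width `ε` for which the saddle point belongs to `n`, that is, `n = 6 / (π² ε⁴)`. -/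
def saddleWidth (n : ℕ) : ℝ := √√(6 / (π ^ 2 * n))

theorem saddleWidth_pos {n : ℕ} (hn : 0 < n) : 0 < saddleWidth n := by
  rw [saddleWidth]
  positivity

theorem natCast_eq_div_saddleWidth_pow {n : ℕ} (hn : 0 < n) :
    (n : ℝ) = 6 / (π ^ 2 * saddleWidth n ^ 4) := by
  have hpow : saddleWidth n ^ 4 = 6 / (π ^ 2 * n) := by
    rw [saddleWidth, pow_mul _ 2 2, Real.sq_sqrt (by positivity), Real.sq_sqrt (by positivity)]
  rw [hpow]
  field_simp

theorem tendsto_saddleWidth : Tendsto saddleWidth atTop (𝓝[>] 0) := by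
  refine tendsto_nhdsWithin_iff.2 ⟨?_, (eventually_gt_atTop 0).mono fun n ↦ saddleWidth_pos⟩
  have hquot : Tendsto (fun n : ℕ ↦ 6 / π ^ 2 / n) atTop (𝓝 0) :=
    tendsto_const_div_atTop_nhds_zero_nat _
  unfold saddleWidth
  simpa only [div_div, Real.sqrt_zero] using hquot.sqrt.sqrt

end MainTerm

/-- The Hardy–Ramanujan asymptotic: `p(n)/L(n) → 1` as `n → ∞`. -/
theorem hardy_ramanujan_asymptotic :
    Filter.Tendsto (fun n : ℕ => (partitionCount n : ℝ) / hardyRamanujanL n)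
      Filter.atTop (nhds 1) := by
  have hlim := (tendsto_saddleIntegral.comp tendsto_saddleWidth).const_mul (√π : ℂ)⁻¹
  rw [inv_mul_cancel₀ (ofReal_ne_zero.2 (Real.sqrt_pos.2 Real.pi_pos).ne')] at hlim
  refine tendsto_ofReal_iff.1 (hlim.congr' ?_)
  filter_upwards [eventually_gt_atTop 0] with n hn
  exact (partitionCount_div_hardyRamanujanL (saddleWidth_pos hn)
    (natCast_eq_div_saddleWidth_pow hn)).symm
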